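/- Let (M, Ω, V) be a graded von Neumann algebra with modular conjugation J. Then there exists a unique maximal central projection p ∈ Z(M)^γ with the property that there exists a partial isometry u_p ∈ Z(M_p, V_p) with u_p* u_p = u_p u_p* = p, where M_p = pMp and V_p = pVp. Moreover V_p = u_p J u_p J, and the twisted center decomposes as Z(M, V) = Z(M_p, V_p) ⊕ Z(M_{p⊥}, V_{p⊥}) = u_p · Z(M_p) ⊕ {0}, where p⊥ = 1 − p. -/

import Mathlib

open scoped InnerProductSpace ComplexOrder

noncomputable section

variable {H : Type*} [NormedAddCommGroup H] [InnerProductSpace ℂ H] [CompleteSpace H]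

/-- A graded von Neumann algebra in standard form: a von Neumann algebra `M` with a cyclic
and separating vector `Ω`, the associated modular data `(J, Δ^{it})` (characterized by the
Tomita-Takesaki relations below), and a `ℤ₂`-grading `V`. -/
structure GradedVN (H : Type*) [NormedAddCommGroup H] [InnerProductSpace ℂ H]
    [CompleteSpace H] where
  M : VonNeumannAlgebra H
  Ω : H
  cyclic : Dense {ξ : H | ∃ x ∈ M, x Ω = ξ}
  separating : ∀ x ∈ M, x Ω = 0 → x = 0
  /-- the modular conjugation (an antiunitary involution) -/
  J : H → H
  J_add : ∀ ξ η, J (ξ + η) = J ξ + J η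
  J_smul : ∀ (c : ℂ) (ξ), J (c • ξ) = starRingEnd ℂ c • J ξ
  J_inner : ∀ ξ η, ⟪J ξ, J η⟫_ℂ = ⟪η, ξ⟫_ℂ
  J_invol : ∀ ξ, J (J ξ) = ξ
  J_Ω : J Ω = Ω
  /-- the modular group `Δ^{it}` -/
  U : ℝ → H ≃ₗᵢ[ℂ] H
  U_zero : ∀ ξ, U 0 ξ = ξ
  U_add : ∀ s t ξ, U (s + t) ξ = U s (U t ξ)
  U_cont : ∀ ξ, Continuous fun t : ℝ => U t ξ
  U_Ω : ∀ t, U t Ω = Ω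
  J_U : ∀ t ξ, J (U t ξ) = U t (J ξ)
  flow_mem : ∀ t : ℝ, ∀ x ∈ M, ∃ y ∈ M, ∀ ξ, y ξ = U t (x (U (-t) ξ))
  /-- `J M J ⊆ M'` -/
  tomita : ∀ x ∈ M, ∀ y ∈ M, ∀ ξ, J (x (J (y ξ))) = y (J (x (J ξ)))
  /-- `S = J Δ^{1/2}` maps `xΩ` to `x*Ω`, expressed via analytic continuation of the
  modular group. -/
  S_cond : ∀ x ∈ M, ∀ f : ℂ → H, Differentiable ℂ f → (∀ t : ℝ, f (t : ℂ) = U t (x Ω)) →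
    J (f (-(Complex.I) / 2)) = star x Ω
  /-- the grading -/
  V : H →L[ℂ] H
  V_star : star V = V
  V_invol : ∀ ξ, V (V ξ) = ξ
  V_Ω : V Ω = Ω
  V_mem : ∀ x ∈ M, ∃ y ∈ M, ∀ ξ, y ξ = V (x (V ξ))

namespace GradedVN

variable (N : GradedVN H)

/-- The `V`-twisted center `Z(M, V) = {x ∈ M | J x* J = x V}`. -/
def twistedCenter : Set (H →L[ℂ] H) :=
  {x | x ∈ N.M ∧ ∀ ξ, N.J (star x (N.J ξ)) = x (N.V ξ)}

/-- The center `Z(M)` of `M`. -/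
def centerSet : Set (H →L[ℂ] H) :=
  {z | z ∈ N.M ∧ ∀ y ∈ N.M, z * y = y * z}

/-- The `Ad_V`-fixed points `M^γ`. -/
def gammaFixed : Set (H →L[ℂ] H) :=
  {x | x ∈ N.M ∧ ∀ ξ, N.V (x (N.V ξ)) = x ξ}

/-- The fixed points `M^α` of the modular flow. -/
def flowFixed : Set (H →L[ℂ] H) :=
  {x | x ∈ N.M ∧ ∀ (t : ℝ) (ξ), x (N.U t ξ) = N.U t (x ξ)}

/-- The centralizer `Z_Ω(M)`. -/
def centralizerSet : Set (H →L[ℂ] H) :=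
  {x | x ∈ N.M ∧ ∀ y ∈ N.M, ⟪N.Ω, x (y N.Ω)⟫_ℂ = ⟪N.Ω, y (x N.Ω)⟫_ℂ}

/-- The twisted center of the reduced algebra `(M_p, V_p)` for a central `Ad_V`-invariant
projection `p` (for such `p`, the modular conjugation of `(pMp, pΩ)` is `J` restricted
to `pH`, so the relative twisted center consists of the `p`-supported elements of `M`
satisfying the twisted-center relation). -/
def tcRel (p : H →L[ℂ] H) : Set (H →L[ℂ] H) :=
  {x | x ∈ N.M ∧ x * p = x ∧ p * x = x ∧ ∀ ξ, N.J (star x (N.J ξ)) = x (N.V ξ)}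

/-- `p` is an `Ad_V`-invariant central projection. -/
def IsCentralInvProj (p : H →L[ℂ] H) : Prop :=
  p ∈ N.centerSet ∧ star p = p ∧ p * p = p ∧ ∀ ξ, N.V (p (N.V ξ)) = p ξ

/-- `p` is an `Ad_V`-invariant central projection carrying a partial isometry in the
relative twisted center which is unitary on `pH`. -/
def HasPI (p : H →L[ℂ] H) : Prop :=
  N.IsCentralInvProj p ∧ ∃ u ∈ N.tcRel p, star u * u = p ∧ u * star u = p

/-- Asymptotically abelian modular flow: `[α_t(x), y] → 0` weakly as `t → ∞`. -/
def AsympAbelian : Prop :=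
  ∀ x ∈ N.M, ∀ y ∈ N.M, ∀ ξ η : H,
    Filter.Tendsto
      (fun t : ℝ => ⟪ξ, N.U t (x (N.U (-t) (y η))) - y (N.U t (x (N.U (-t) η)))⟫_ℂ)
      Filter.atTop (nhds 0)

/-- `V`-graded asymptotically abelian modular flow:
`[α_t(x), y]_V = α_t(x) y − (V y V) α_t(x) → 0` weakly as `t → ∞`. -/
def GradedAsympAbelian : Prop :=
  ∀ x ∈ N.M, ∀ y ∈ N.M, ∀ ξ η : H,
    Filter.Tendsto
      (fun t : ℝ =>
        ⟪ξ, N.U t (x (N.U (-t) (y η))) - N.V (y (N.V (N.U t (x (N.U (-t) η)))))⟫_ℂ)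
      Filter.atTop (nhds 0)

end GradedVN

/-!
The twisted center `Z(M, V)` is a weak-operator closed subspace of `M`, and it is closed under the
triple product `x y⋆ z` because `x y⋆` and `x⋆ y` are central for twisted-central `x`, `y`. By
Krein–Milman its unit ball has an extreme point `u`; as in Kadison's description of extreme points
of the unit ball of a C⋆-algebra, `u` is a partial isometry with
`(1 - u u⋆) Z(M, V) (1 - u⋆ u) = 0`. Both supports are central, hence equal to one projection `p`,
and `p` is a unit for `Z(M, V)`.

That central elements multiply `Z(M, V)` into itself rests on `J z⋆ J = z` for central `z`, that is,
on `z Ω` being fixed by `Δ^{it}`. After Gaussian smoothing the orbit `t ↦ Δ^{it} z Ω` extends to an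
entire function `f`. Central elements are normal, so `S = J Δ^{1/2}` preserves the norm of `f`;
hence `‖f‖` is invariant under real translations and periodic in the imaginary direction, and `f`
is constant by Liouville.
-/

section Entire

open MeasureTheory Topology Metric Filter

variable {E : Type*} [NormedAddCommGroup E] [NormedSpace ℂ E]

theorem differentiable_integral_of_dominated {α : Type*} [MeasurableSpace α] {μ : Measure α}
    {F : ℂ → α → E} (hF : ∀ a, Differentiable ℂ (F · a))
    (hF_meas : ∀ w, AEStronglyMeasurable (F w) μ)
    (hF_bound : ∀ R : ℝ, ∃ b : α → ℝ, Integrable b μ ∧ ∀ w, ‖w‖ ≤ R → ∀ a, ‖F w a‖ ≤ b a) :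
    Differentiable ℂ fun w ↦ ∫ a, F w a ∂μ := by
  intro w₀
  obtain ⟨b, hb, hFb⟩ := hF_bound (‖w₀‖ + 2)
  have hderiv_meas : AEStronglyMeasurable (fun a ↦ deriv (F · a) w₀) μ :=
    aestronglyMeasurable_of_tendsto_ae (𝓝[≠] (0 : ℂ))
      (fun h ↦ ((hF_meas (w₀ + h)).sub (hF_meas w₀)).const_smul h⁻¹)
      (ae_of_all _ fun a ↦ (hF a w₀).hasDerivAt.tendsto_slope_zero)
  have hderiv_bound (a : α) (w : ℂ) (hw : w ∈ ball w₀ 1) : ‖deriv (F · a) w‖ ≤ b a := by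
    have hsphere (v : ℂ) (hv : v ∈ sphere w 1) : ‖F v a‖ ≤ b a := by
      refine hFb v ?_ a
      rw [mem_ball_iff_norm] at hw
      rw [mem_sphere_iff_norm] at hv
      calc ‖v‖ = ‖w₀ + (w - w₀) + (v - w)‖ := by congr 1; abel
        _ ≤ ‖w₀‖ + 2 := by linarith [norm_add₃_le (a := w₀) (b := w - w₀) (c := v - w)]
    simpa using Complex.norm_deriv_le_of_forall_mem_sphere_norm_le one_pos
      (hF a).diffContOnCl hsphere
  exact (hasDerivAt_integral_of_dominated_loc_of_deriv_le (ball_mem_nhds w₀ one_pos)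
    (.of_forall hF_meas)
    (hb.mono' (hF_meas w₀) (ae_of_all _ (hFb w₀ (by linarith)))) hderiv_meas
    (ae_of_all _ hderiv_bound) hb
    (ae_of_all _ fun a w _ ↦ (hF a w).hasDerivAt)).2.differentiableAt

theorem norm_exp_neg_ofReal_sub_sq_le (t : ℝ) (w : ℂ) :
    ‖Complex.exp (-((t : ℂ) - w) ^ 2)‖ ≤ Real.exp (‖w‖ ^ 2) * Real.exp (-(1 / 2) * t ^ 2) := by
  rw [Complex.norm_exp, ← Real.exp_add, Real.exp_le_exp, Complex.sq_norm, Complex.normSq_apply]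
  have hre : (-((t : ℂ) - w) ^ 2).re = w.im ^ 2 - (t - w.re) ^ 2 := by
    simp [sq]
  rw [hre]
  nlinarith [sq_nonneg (t - 2 * w.re)]

/-- Convolution of `g` with the Gaussian `exp (-t²)`, evaluated at a complex point. For bounded
continuous `g` it is an entire function; the Gaussian is not normalized, its integral is `√π`. -/
def gaussianMollify (g : ℝ → E) (w : ℂ) : E :=
  ∫ t : ℝ, Complex.exp (-((t : ℂ) - w) ^ 2) • g t

variable {g : ℝ → E}

theorem norm_gaussian_smul_le {C : ℝ} (hC : ∀ t, ‖g t‖ ≤ C) {R : ℝ} {w : ℂ} (hw : ‖w‖ ≤ R)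
    (t : ℝ) : ‖Complex.exp (-((t : ℂ) - w) ^ 2) • g t‖ ≤
      Real.exp (R ^ 2) * Real.exp (-(1 / 2) * t ^ 2) * C := by
  have hC0 : 0 ≤ C := (norm_nonneg _).trans (hC 0)
  grw [norm_smul, norm_exp_neg_ofReal_sub_sq_le, hC t, hw]

theorem integrable_gaussian_bound (R C : ℝ) :
    Integrable fun t : ℝ ↦ Real.exp (R ^ 2) * Real.exp (-(1 / 2) * t ^ 2) * C :=
  ((integrable_exp_neg_mul_sq one_half_pos).const_mul _).mul_const C

theorem differentiable_gaussianMollify (hg : Continuous g) {C : ℝ} (hC : ∀ t, ‖g t‖ ≤ C) :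
    Differentiable ℂ (gaussianMollify g) :=
  differentiable_integral_of_dominated (fun _ ↦ by fun_prop)
    (fun w ↦ by fun_prop)
    (fun R ↦ ⟨_, integrable_gaussian_bound R C, fun _ hw ↦ norm_gaussian_smul_le hC hw⟩)

theorem gaussianMollify_comp_add_right (g : ℝ → E) (s : ℝ) (w : ℂ) :
    gaussianMollify (fun t ↦ g (t + s)) w = gaussianMollify g (w + s) := by
  rw [gaussianMollify, gaussianMollify,
    ← integral_add_right_eq_self (fun t : ℝ ↦ Complex.exp (-((t : ℂ) - (w + s)) ^ 2) • g t) s]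
  congr! 5
  push_cast
  ring

theorem gaussianMollify_const_zero [CompleteSpace E] (ξ : E) :
    gaussianMollify (fun _ ↦ ξ) 0 = (√Real.pi : ℂ) • ξ := by
  have hint : ∫ t : ℝ, Complex.exp (-((t : ℂ) - 0) ^ 2) = √Real.pi := by
    rw [← div_one Real.pi, ← integral_gaussian, ← integral_complex_ofReal]
    congr! 2 with t
    push_cast
    ring_nf
  rw [gaussianMollify, integral_smul_const, hint]

theorem tendsto_gaussianMollify_comp_mul [CompleteSpace E] (hg : Continuous g) {C : ℝ}
    (hC : ∀ t, ‖g t‖ ≤ C) :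
    Tendsto (fun δ : ℝ ↦ gaussianMollify (fun t ↦ g (δ * t)) 0) (𝓝 0)
      (𝓝 ((√Real.pi : ℂ) • g 0)) := by
  rw [← gaussianMollify_const_zero]
  refine tendsto_integral_filter_of_dominated_convergence _ (.of_forall fun δ ↦ by fun_prop)
    (.of_forall fun δ ↦ ae_of_all _ <| norm_gaussian_smul_le (fun t ↦ hC (δ * t)) norm_zero.le)
    (integrable_gaussian_bound 0 C) (ae_of_all _ fun t ↦ .const_smul ?_ _)
  exact (hg.comp (continuous_mul_const t)).tendsto' 0 _ (by simp)

theorem apply_eq_apply_of_norm_periodic {f : ℂ → E} (hf : Differentiable ℂ f)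
    (hreal : ∀ (w : ℂ) (s : ℝ), ‖f (w + s)‖ = ‖f w‖) {c : ℝ} (hc : c ≠ 0)
    (him : ∀ w, ‖f (w + c * Complex.I)‖ = ‖f w‖) (v w : ℂ) : f v = f w := by
  have hnorm_im (w : ℂ) : ‖f w‖ = ‖f (w.im * Complex.I)‖ := by
    rw [← hreal (w.im * Complex.I) w.re, add_comm, Complex.re_add_im]
  have hperiodic : Function.Periodic (fun y : ℝ ↦ ‖f (y * Complex.I)‖) c := fun y ↦ by
    simpa [add_mul] using him (y * Complex.I)
  have hbdd := hperiodic.isBounded_of_continuous hc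
    (hf.continuous.comp (by fun_prop)).norm
  obtain ⟨K, hK⟩ := hbdd.exists_norm_le
  refine hf.apply_eq_apply_of_bounded (isBounded_iff_forall_norm_le.2 ⟨K, ?_⟩) v w
  rintro _ ⟨w, rfl⟩
  rw [hnorm_im]
  simpa using hK _ ⟨w.im, rfl⟩

theorem exists_clm_apply_eq_integral_and_commute {𝕜 G α : Type*} [RCLike 𝕜] [NormedAddCommGroup G]
    [NormedSpace 𝕜 G] [NormedSpace ℝ G] [CompleteSpace G] [MeasurableSpace α] {μ : Measure α}
    {F : α → G →L[𝕜] G} {b : α → ℝ} (hF_meas : ∀ ξ, AEStronglyMeasurable (fun a ↦ F a ξ) μ)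
    (hb : Integrable b μ) (hF_bound : ∀ a, ‖F a‖ ≤ b a) :
    ∃ T : G →L[𝕜] G, (∀ ξ, T ξ = ∫ a, F a ξ ∂μ) ∧ ∀ A, (∀ a, Commute A (F a)) → Commute A T := by
  have hbound (ξ : G) (a : α) : ‖F a ξ‖ ≤ b a * ‖ξ‖ := (F a).le_of_opNorm_le (hF_bound a) ξ
  have hint (ξ : G) : Integrable (fun a ↦ F a ξ) μ :=
    (hb.mul_const ‖ξ‖).mono' (hF_meas ξ) (ae_of_all _ (hbound ξ))
  let T : G →L[𝕜] G := LinearMap.mkContinuous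
    { toFun := fun ξ ↦ ∫ a, F a ξ ∂μ
      map_add' := fun ξ η ↦ by simp_rw [map_add]; exact integral_add (hint ξ) (hint η)
      map_smul' := fun c ξ ↦ by simp_rw [map_smul]; exact integral_smul c _ }
    (∫ a, b a ∂μ) fun ξ ↦ by
      rw [← integral_mul_const]
      exact norm_integral_le_of_norm_le (hb.mul_const ‖ξ‖) (ae_of_all _ (hbound ξ))
  refine ⟨T, fun ξ ↦ rfl, fun A hA ↦ ?_⟩
  ext ξ
  calc A (∫ a, F a ξ ∂μ) = ∫ a, A (F a ξ) ∂μ := (A.integral_comp_comm (hint ξ)).symm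
    _ = ∫ a, F a (A ξ) ∂μ := integral_congr_ae <| ae_of_all _ fun a ↦ congr($(hA a) ξ)

end Entire

section WeakOperatorTopology

open Filter Topology Metric

theorem isCompact_setOf_norm_toCLM_le {𝕜 E : Type*} [RCLike 𝕜] [NormedAddCommGroup E]
    [InnerProductSpace 𝕜 E] [CompleteSpace E] (r : ℝ) :
    IsCompact {T : E →WOT[𝕜] E | ‖T.toCLM‖ ≤ r} := by
  rw [isCompact_iff_ultrafilter_le_nhds]
  intro 𝒰 h𝒰
  have hle : ∀ᶠ T : E →WOT[𝕜] E in 𝒰, ‖T.toCLM‖ ≤ r := h𝒰 (mem_principal_self _)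
  have hlim : ∀ x y : E, ∃ b ∈ closedBall (0 : 𝕜) (r * ‖x‖ * ‖y‖),
      Tendsto (fun T : E →WOT[𝕜] E ↦ ⟪T x, y⟫_𝕜) 𝒰 (𝓝 b) := fun x y ↦
    (isCompact_closedBall _ _).ultrafilter_le_nhds' (𝒰.map fun T ↦ ⟪T x, y⟫_𝕜) <|
      hle.mono fun T hT ↦ by
        rw [mem_closedBall_zero_iff]
        grw [norm_inner_le_norm, ← T.toCLM_apply, T.toCLM.le_opNorm, hT]
  choose b hb hblim using hlim
  let B : E →L⋆[𝕜] E →L[𝕜] 𝕜 := LinearMap.mkContinuous₂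
    (LinearMap.mk₂'ₛₗ (starRingEnd 𝕜) (RingHom.id 𝕜) b
      (fun x x' y ↦ tendsto_nhds_unique (hblim _ _) <| by
        simpa [inner_add_left] using (hblim x y).add (hblim x' y))
      (fun c x y ↦ tendsto_nhds_unique (hblim _ _) <| by
        simpa [inner_smul_left] using (hblim x y).const_mul (starRingEnd 𝕜 c))
      (fun x y y' ↦ tendsto_nhds_unique (hblim _ _) <| by
        simpa [inner_add_right] using (hblim x y).add (hblim x y'))
      (fun c x y ↦ tendsto_nhds_unique (hblim _ _) <| by
        simpa [inner_smul_right] using (hblim x y).const_mul c))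
    r (fun x y ↦ mem_closedBall_zero_iff.1 (hb x y))
  set T := InnerProductSpace.continuousLinearMapOfBilin B
  have hT (x y : E) : ⟪T x, y⟫_𝕜 = b x y :=
    InnerProductSpace.continuousLinearMapOfBilin_apply B x y
  refine ⟨.ofCLM T, ?_, ?_⟩
  · obtain ⟨S, hS⟩ := hle.exists
    refine T.opNorm_le_of_re_inner_le ((norm_nonneg _).trans hS) fun x y hx hy ↦ ?_
    grw [RCLike.re_le_norm, hT, mem_closedBall_zero_iff.1 (hb x y), hx, hy, mul_one, mul_one]
  · rw [ContinuousLinearMapWOT.le_nhds_iff_forall_inner_apply_le_nhds]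
    intro x y
    rw [ContinuousLinearMapWOT.ofCLM_apply, ← inner_conj_symm, hT]
    exact ((RCLike.continuous_conj.tendsto _).comp (hblim x y)).congr fun S ↦
      inner_conj_symm _ _

theorem extremePoints_inter_closedBall_nonempty {S : Submodule ℂ (H →L[ℂ] H)}
    (hS : IsClosed {T : H →WOT[ℂ] H | T.toCLM ∈ S}) :
    ((S ∩ closedBall 0 1 : Set (H →L[ℂ] H)).extremePoints ℝ).Nonempty := by
  let e : (H →WOT[ℂ] H) ≃ₗ[ℝ] (H →L[ℂ] H) := ContinuousLinearMapWOT.linearEquiv ℝ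
  have hpreimage : e ⁻¹' (S ∩ closedBall 0 1) =
      {T : H →WOT[ℂ] H | T.toCLM ∈ S} ∩ {T | ‖T.toCLM‖ ≤ 1} := by
    ext T
    simp [e]
  have hcompact : IsCompact (e ⁻¹' (S ∩ closedBall 0 1)) :=
    hpreimage ▸ (isCompact_setOf_norm_toCLM_le 1).inter_left hS
  have := (hcompact.extremePoints_nonempty ⟨0, by simp⟩).image e
  rwa [image_extremePoints, Set.image_preimage_eq _ e.surjective] at this

end WeakOperatorTopology

section TernaryRing

open Metric

variable {A : Type*} [CStarAlgebra A]

theorem eq_zero_of_mem_extremePoints_of_add_mem_of_sub_mem {E : Type*} [AddCommGroup E]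
    [Module ℝ E] {s : Set E} {u d : E} (hu : u ∈ s.extremePoints ℝ) (hadd : u + d ∈ s)
    (hsub : u - d ∈ s) : d = 0 := by
  have hseg : u ∈ openSegment ℝ (u + d) (u - d) :=
    ⟨1 / 2, 1 / 2, by norm_num, by norm_num, by norm_num, by module⟩
  simpa using (mem_extremePoints.1 hu).2 _ hadd _ hsub hseg

attribute [local instance] CStarAlgebra.spectralOrder CStarAlgebra.spectralOrderedRing

theorem star_mul_self_le_one_iff_norm_le_one {x : A} : star x * x ≤ 1 ↔ ‖x‖ ≤ 1 := by
  rw [← CStarAlgebra.norm_le_one_iff_of_nonneg (star x * x), CStarRing.norm_star_mul_self,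
    ← sq, sq_le_one_iff₀ (norm_nonneg x)]

theorem norm_three_smul_sub_mul_star_mul_le {x : A} (hx : ‖x‖ ≤ 1) :
    ‖(3 : ℝ) • x - x * star x * x‖ ≤ 2 := by
  set b : A := 1 - star x * x with hb
  have hb0 : 0 ≤ b := sub_nonneg.2 (star_mul_self_le_one_iff_norm_le_one.2 hx)
  set z : A := (2⁻¹ : ℝ) • ((3 : ℝ) • x - x * star x * x) with hz
  have hdefect : 1 - star z * z = (4⁻¹ : ℝ) • ((3 : ℝ) • b ^ 2 + b ^ 3) := by
    simp only [hz, hb, star_smul, star_sub, star_mul, star_star, star_trivial, pow_succ,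
      pow_zero, one_mul, mul_sub, sub_mul, mul_one, smul_mul_assoc, mul_smul_comm,
      mul_assoc]
    module
  have hz1 : ‖z‖ ≤ 1 := star_mul_self_le_one_iff_norm_le_one.1 <| sub_nonneg.1 <| by
    rw [hdefect]
    exact smul_nonneg (by norm_num) (add_nonneg (smul_nonneg (by norm_num)
      (CStarAlgebra.pow_nonneg hb0 2)) (CStarAlgebra.pow_nonneg hb0 3))
  rw [hz, norm_smul] at hz1
  norm_num at hz1
  linarith

theorem norm_add_le_one_of_star_mul_self_eq {u y p : A} (hp : IsStarProjection p)
    (hu : star u * u = p) (huy : star u * y = 0) (hyp : y * p = 0) (hy : ‖y‖ ≤ 1) :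
    ‖u + y‖ ≤ 1 := by
  rw [← star_mul_self_le_one_iff_norm_le_one]
  have hyu : star y * u = 0 := by simpa using congrArg star huy
  have hpy : p * star y = 0 := by simpa [hp.isSelfAdjoint.star_eq] using congrArg star hyp
  calc star (u + y) * (u + y) = p + star (1 - p) * (star y * y) * (1 - p) := by
        simp only [star_add, add_mul, mul_add, hu, huy, hyu, star_sub, star_one,
          hp.isSelfAdjoint.star_eq, sub_mul, mul_sub, one_mul, mul_one, mul_assoc, hyp]
        simp only [← mul_assoc, hpy]
        simp
    _ ≤ p + star (1 - p) * 1 * (1 - p) := by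
        gcongr
        exact star_left_conjugate_le_conjugate (star_mul_self_le_one_iff_norm_le_one.2 hy) _
    _ = 1 := by
        rw [mul_one, hp.one_sub.isSelfAdjoint.star_eq, hp.one_sub.isIdempotentElem.eq,
          add_sub_cancel]

/-- A *ternary ring of operators*: a subspace closed under the triple product `x y⋆ z`. -/
def IsTernaryRing {A : Type*} [NonUnitalSemiring A] [Star A] [Module ℂ A] (S : Submodule ℂ A) :
    Prop :=
  ∀ x ∈ S, ∀ y ∈ S, ∀ z ∈ S, x * star y * z ∈ S

namespace IsTernaryRing

variable {S : Submodule ℂ A} {u x : A}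

theorem mul_star_mul_self_of_mem_extremePoints (hS : IsTernaryRing S)
    (hu : u ∈ (S ∩ closedBall 0 1 : Set A).extremePoints ℝ) : u * star u * u = u := by
  obtain ⟨huS, hu1⟩ := hu.1
  rw [mem_closedBall_zero_iff] at hu1
  have hS_triple : u * star u * u ∈ S := hS u huS u huS u huS
  have htriple1 : ‖u * star u * u‖ ≤ 1 := by
    grw [norm_mul_le, norm_mul_le, norm_star, hu1, hu1, hu1]; norm_num
  have hhalf {y : A} (hy : y ∈ S) (hy2 : ‖y‖ ≤ 2) :
      (2⁻¹ : ℂ) • y ∈ (S ∩ closedBall 0 1 : Set A) := by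
    refine ⟨S.smul_mem _ hy, mem_closedBall_zero_iff.2 ?_⟩
    rw [norm_smul, norm_inv, RCLike.norm_ofNat]
    linarith
  -- `u` is the midpoint of `(3u - u u⋆ u) / 2` and `(u + u u⋆ u) / 2`.
  have hd : (2⁻¹ : ℂ) • (u - u * star u * u) = 0 := by
    refine eq_zero_of_mem_extremePoints_of_add_mem_of_sub_mem hu ?_ ?_
    · convert hhalf (S.sub_mem (S.smul_mem (3 : ℂ) huS) hS_triple) ?_ using 1
      · module
      · exact norm_three_smul_sub_mul_star_mul_le hu1
    · convert hhalf (S.add_mem huS hS_triple) ?_ using 1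
      · module
      · grw [norm_add_le, hu1, htriple1]; norm_num
  exact (sub_eq_zero.1 ((smul_eq_zero_iff_right (by norm_num)).1 hd)).symm

theorem one_sub_mul_mul_one_sub_eq_zero_of_mem_extremePoints (hS : IsTernaryRing S)
    (hu : u ∈ (S ∩ closedBall 0 1 : Set A).extremePoints ℝ) (hx : x ∈ S) :
    (1 - u * star u) * x * (1 - star u * u) = 0 := by
  have hpi : u * star u * u = u := hS.mul_star_mul_self_of_mem_extremePoints hu
  have huS : u ∈ S := hu.1.1
  set y := (1 - u * star u) * x * (1 - star u * u) with hy
  have hyS : y ∈ S := by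
    have hxu : x * star u * u ∈ S := hS x hx u huS u huS
    have : y = x - x * star u * u - u * star u * x + u * star u * (x * star u * u) := by
      rw [hy]; noncomm_ring
    rw [this]
    exact S.add_mem (S.sub_mem (S.sub_mem hx hxu) (hS u huS u huS x hx)) (hS u huS u huS _ hxu)
  have hp : IsStarProjection (star u * u) :=
    ⟨by rw [IsIdempotentElem, mul_assoc, ← mul_assoc u, hpi], .star_mul_self u⟩
  have huy : star u * y = 0 := by
    have : star u * (1 - u * star u) = 0 := by
      simpa [mul_sub, sub_mul, mul_assoc, sub_eq_zero] using (congrArg star hpi).symm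
    rw [hy, ← mul_assoc, ← mul_assoc, this, zero_mul, zero_mul]
  have hyp : y * (star u * u) = 0 := by
    rw [hy, mul_assoc, hp.isIdempotentElem.one_sub_mul_self, mul_zero]
  have hball {c : ℂ} (hc : ‖c • y‖ ≤ 1) : u + c • y ∈ (S ∩ closedBall 0 1 : Set A) :=
    ⟨S.add_mem huS (S.smul_mem c hyS), mem_closedBall_zero_iff.2 <|
      norm_add_le_one_of_star_mul_self_eq hp rfl (by rw [mul_smul_comm, huy, smul_zero])
        (by rw [smul_mul_assoc, hyp, smul_zero]) hc⟩
  by_contra hy0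
  have hnorm : ‖(‖y‖⁻¹ : ℂ) • y‖ = 1 := norm_smul_inv_norm hy0
  have : (‖y‖⁻¹ : ℂ) • y = 0 := by
    refine eq_zero_of_mem_extremePoints_of_add_mem_of_sub_mem hu (hball hnorm.le) ?_
    rw [sub_eq_add_neg, ← neg_smul]
    exact hball (by rw [neg_smul, norm_neg, hnorm])
  simp [this] at hnorm

end IsTernaryRing

end TernaryRing

namespace GradedVN

open Filter Topology

variable (N : GradedVN H) {x y z u p : H →L[ℂ] H}

theorem norm_J (ξ : H) : ‖N.J ξ‖ = ‖ξ‖ := by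
  rw [norm_eq_sqrt_re_inner (𝕜 := ℂ), N.J_inner, ← norm_eq_sqrt_re_inner]

/-- The modular conjugation `J`, bundled as a continuous conjugate-linear map so that it can be
composed with operators. -/
def modularConj : H →L⋆[ℂ] H :=
  LinearMap.mkContinuous { toFun := N.J, map_add' := N.J_add, map_smul' := N.J_smul } 1
    fun ξ ↦ by rw [one_mul]; exact (N.norm_J ξ).le

/-- The conjugate-linear automorphism `x ↦ J x J` of `B(H)`, which maps `M` into its commutant. -/
def conjJ (x : H →L[ℂ] H) : H →L[ℂ] H :=
  N.modularConj.comp (x.comp N.modularConj)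

theorem conjJ_apply (x : H →L[ℂ] H) (ξ : H) : N.conjJ x ξ = N.J (x (N.J ξ)) := rfl

theorem inner_J_comm (ξ η : H) : ⟪ξ, N.J η⟫_ℂ = ⟪η, N.J ξ⟫_ℂ := by
  rw [← N.J_inner, N.J_invol]

theorem conjJ_mul (x y : H →L[ℂ] H) : N.conjJ (x * y) = N.conjJ x * N.conjJ y := by
  ext ξ
  simp [conjJ_apply, N.J_invol]

theorem conjJ_add (x y : H →L[ℂ] H) : N.conjJ (x + y) = N.conjJ x + N.conjJ y := by
  ext ξ
  simp [conjJ_apply, N.J_add]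

theorem conjJ_smul (c : ℂ) (x : H →L[ℂ] H) :
    N.conjJ (c • x) = starRingEnd ℂ c • N.conjJ x := by
  ext ξ
  simp [conjJ_apply, N.J_smul]

theorem star_conjJ (x : H →L[ℂ] H) : star (N.conjJ x) = N.conjJ (star x) := by
  refine ((ContinuousLinearMap.eq_adjoint_iff _ _).2 fun ξ η ↦ ?_).symm
  calc ⟪N.J (star x (N.J ξ)), η⟫_ℂ = ⟪N.J η, star x (N.J ξ)⟫_ℂ := by rw [← N.J_inner, N.J_invol]
    _ = ⟪x (N.J η), N.J ξ⟫_ℂ := ContinuousLinearMap.adjoint_inner_right x _ _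
    _ = ⟪ξ, N.J (x (N.J η))⟫_ℂ := N.inner_J_comm _ _

variable {N}

theorem mem_centerSet_iff_mem_commutant : z ∈ N.centerSet ↔ z ∈ N.M ∧ z ∈ N.M.commutant := by
  simp [centerSet, VonNeumannAlgebra.mem_commutant_iff, eq_comm]

theorem mem_of_commute_commutant (h : ∀ y ∈ N.M.commutant, Commute y x) : x ∈ N.M := by
  rw [← N.M.commutant_commutant, VonNeumannAlgebra.mem_commutant_iff]
  exact h

theorem conjJ_mem_commutant (hx : x ∈ N.M) : N.conjJ x ∈ N.M.commutant := by
  rw [VonNeumannAlgebra.mem_commutant_iff]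
  exact fun y hy ↦ ContinuousLinearMap.ext fun ξ ↦ (N.tomita x hx y hy ξ).symm

theorem eq_of_apply_Ω_eq_of_mem_commutant (hx : x ∈ N.M.commutant) (hy : y ∈ N.M.commutant)
    (h : x N.Ω = y N.Ω) : x = y := by
  refine DFunLike.coe_injective <| x.continuous.ext_on N.cyclic y.continuous ?_
  rintro _ ⟨m, hm, rfl⟩
  rw [VonNeumannAlgebra.mem_commutant_iff] at hx hy
  calc x (m N.Ω) = m (x N.Ω) := congr($((hx m hm).symm) N.Ω)
    _ = m (y N.Ω) := by rw [h]
    _ = y (m N.Ω) := congr($(hy m hm) N.Ω)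

/-! ### Invariance of the center under the modular flow -/

variable (N)

theorem U_symm (t : ℝ) : (N.U t).symm = N.U (-t) := by
  ext ξ
  rw [LinearIsometryEquiv.symm_apply_eq, ← N.U_add, add_neg_cancel, N.U_zero]

theorem continuous_uncurry_U : Continuous fun q : ℝ × H ↦ N.U q.1 q.2 :=
  continuous_prod_of_continuous_lipschitzWith' _ 1 (fun t ↦ (N.U t).lipschitz) N.U_cont

/-- The modular automorphism `x ↦ Δ^{it} x Δ^{-it}`, defined on all of `B(H)`; it preserves `M`. -/
def modularFlow (t : ℝ) : (H →L[ℂ] H) ≃⋆ₐ[ℂ] (H →L[ℂ] H) :=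
  (N.U t).conjStarAlgEquiv

theorem modularFlow_apply_apply (t : ℝ) (x : H →L[ℂ] H) (ξ : H) :
    N.modularFlow t x ξ = N.U t (x (N.U (-t) ξ)) := by
  rw [← U_symm]
  rfl

theorem modularFlow_symm (t : ℝ) : (N.modularFlow t).symm = N.modularFlow (-t) := by
  rw [modularFlow, LinearIsometryEquiv.symm_conjStarAlgEquiv, U_symm, modularFlow]

theorem modularFlow_apply_Ω (t : ℝ) (x : H →L[ℂ] H) : N.modularFlow t x N.Ω = N.U t (x N.Ω) := by
  rw [modularFlow_apply_apply, N.U_Ω]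

theorem continuous_modularFlow_apply (x : H →L[ℂ] H) (ξ : H) :
    Continuous fun t ↦ N.modularFlow t x ξ := by
  simp_rw [modularFlow_apply_apply]
  exact N.continuous_uncurry_U.comp
    (continuous_id.prodMk (x.continuous.comp ((N.U_cont ξ).comp continuous_neg)))

variable {N}

theorem modularFlow_mem (t : ℝ) (hx : x ∈ N.M) : N.modularFlow t x ∈ N.M := by
  obtain ⟨y, hy, hyx⟩ := N.flow_mem t x hx
  convert hy
  ext ξ
  rw [modularFlow_apply_apply, hyx]

theorem modularFlow_mem_centerSet (t : ℝ) (hz : z ∈ N.centerSet) :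
    N.modularFlow t z ∈ N.centerSet := by
  refine ⟨modularFlow_mem t hz.1, fun y hy ↦ ?_⟩
  obtain ⟨m, rfl⟩ := EquivLike.surjective (N.modularFlow t) y
  have hm : m ∈ N.M := by
    simpa [← modularFlow_symm] using modularFlow_mem (-t) hy
  rw [← map_mul, hz.2 m hm, map_mul]

variable (N) in
/-- The Gaussian average of the modular orbit `t ↦ Δ^{iδt} ξ`, as a function of a complex
variable. It is an entire stand-in for the orbit, which it approximates (up to the factor `√π`) as
`δ → 0`. -/
def gaussianOrbit (δ : ℝ) (ξ : H) : ℂ → H :=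
  gaussianMollify fun t ↦ N.U (δ * t) ξ

variable (N) in
theorem differentiable_gaussianOrbit (δ : ℝ) (ξ : H) : Differentiable ℂ (N.gaussianOrbit δ ξ) :=
  differentiable_gaussianMollify ((N.U_cont ξ).comp (continuous_const_mul δ))
    fun _ ↦ (LinearIsometryEquiv.norm_map _ ξ).le

variable (N) in
theorem tendsto_gaussianOrbit (ξ : H) :
    Tendsto (fun δ ↦ N.gaussianOrbit δ ξ 0) (𝓝 0) (𝓝 ((√Real.pi : ℂ) • ξ)) := by
  have := tendsto_gaussianMollify_comp_mul (N.U_cont ξ)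
    fun _ ↦ (LinearIsometryEquiv.norm_map _ ξ).le
  rwa [N.U_zero] at this

variable (N) in
theorem U_mul_gaussianOrbit (δ s : ℝ) (ξ : H) (w : ℂ) :
    N.U (δ * s) (N.gaussianOrbit δ ξ w) = N.gaussianOrbit δ ξ (w + s) := by
  rw [gaussianOrbit, ← gaussianMollify_comp_add_right]
  refine ((N.U (δ * s)).toContinuousLinearEquiv.integral_comp_comm _).symm.trans ?_
  simp [gaussianMollify, ← N.U_add, mul_add, add_comm]

variable (N) in
theorem U_gaussianOrbit {δ : ℝ} (hδ : δ ≠ 0) (t : ℝ) (ξ : H) (w : ℂ) :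
    N.U t (N.gaussianOrbit δ ξ w) = N.gaussianOrbit δ ξ (w + t / δ) := by
  rw [← Complex.ofReal_div, ← U_mul_gaussianOrbit, mul_div_cancel₀ _ hδ]

theorem exists_mem_centerSet_apply_Ω_eq_gaussianOrbit (hz : z ∈ N.centerSet) (δ : ℝ) (w : ℂ) :
    ∃ T ∈ N.centerSet, T N.Ω = N.gaussianOrbit δ (z N.Ω) w := by
  have hmeas (ξ : H) : Continuous fun t : ℝ ↦
      (Complex.exp (-((t : ℂ) - w) ^ 2) • N.modularFlow (δ * t) z) ξ := by
    have := N.continuous_modularFlow_apply z ξ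
    simp only [smul_apply]
    fun_prop
  obtain ⟨T, hT, hcomm⟩ := exists_clm_apply_eq_integral_and_commute
    (fun ξ ↦ (hmeas ξ).aestronglyMeasurable (μ := MeasureTheory.volume))
    (integrable_gaussian_bound ‖w‖ ‖z‖)
    (norm_gaussian_smul_le (fun t ↦ (StarAlgEquiv.norm_map (N.modularFlow (δ * t)) z).le) le_rfl)
  have hflow (t : ℝ) := modularFlow_mem_centerSet (δ * t) hz
  refine ⟨T, ⟨?_, fun y hy ↦ ?_⟩, ?_⟩
  · exact mem_of_commute_commutant fun y hy ↦ hcomm y fun t ↦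
      .smul_right (VonNeumannAlgebra.mem_commutant_iff.1 hy _ (hflow t).1).symm _
  · exact (hcomm y fun t ↦ .smul_right ((hflow t).2 y hy).symm _).eq.symm
  · simp_rw [hT, smul_apply, modularFlow_apply_Ω]
    rfl

theorem norm_star_apply_of_mem_centerSet (hz : z ∈ N.centerSet) (ξ : H) : ‖star z ξ‖ = ‖z ξ‖ := by
  have : IsStarNormal z := ⟨(hz.2 _ (star_mem hz.1)).symm⟩
  exact (ContinuousLinearMap.isStarNormal_iff_norm_eq_adjoint.1 this ξ).symm

theorem norm_gaussianOrbit_add_mul_I (hz : z ∈ N.centerSet) {δ : ℝ} (hδ : δ ≠ 0) (w : ℂ) :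
    ‖N.gaussianOrbit δ (z N.Ω) (w + (-(2 * δ)⁻¹ : ℝ) * Complex.I)‖ =
      ‖N.gaussianOrbit δ (z N.Ω) w‖ := by
  obtain ⟨T, hT, hTΩ⟩ := exists_mem_centerSet_apply_Ω_eq_gaussianOrbit hz δ w
  have hS := N.S_cond T hT.1 (fun v ↦ N.gaussianOrbit δ (z N.Ω) (w + v / δ))
    ((N.differentiable_gaussianOrbit δ _).comp (by fun_prop))
    fun t ↦ by rw [hTΩ, N.U_gaussianOrbit hδ]
  have hpoint : w + (-(2 * δ)⁻¹ : ℝ) * Complex.I = w + -Complex.I / 2 / δ := by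
    push_cast
    field_simp
  rw [hpoint, ← norm_J, hS, norm_star_apply_of_mem_centerSet hT, hTΩ]

theorem U_gaussianOrbit_of_mem_centerSet (hz : z ∈ N.centerSet) {δ : ℝ} (hδ : δ ≠ 0) (t : ℝ)
    (w : ℂ) : N.U t (N.gaussianOrbit δ (z N.Ω) w) = N.gaussianOrbit δ (z N.Ω) w := by
  rw [N.U_gaussianOrbit hδ]
  exact apply_eq_apply_of_norm_periodic (N.differentiable_gaussianOrbit δ _)
    (fun v s ↦ by rw [← U_mul_gaussianOrbit, LinearIsometryEquiv.norm_map])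
    (neg_ne_zero.2 (inv_ne_zero (mul_ne_zero two_ne_zero hδ)))
    (norm_gaussianOrbit_add_mul_I hz hδ) _ _

theorem U_apply_Ω_of_mem_centerSet (hz : z ∈ N.centerSet) (t : ℝ) : N.U t (z N.Ω) = z N.Ω := by
  have hlim := (N.tendsto_gaussianOrbit (z N.Ω)).mono_left (nhdsWithin_le_nhds (s := {0}ᶜ))
  have hfixed : ∀ᶠ δ in 𝓝[≠] 0, N.U t (N.gaussianOrbit δ (z N.Ω) 0) =
      N.gaussianOrbit δ (z N.Ω) 0 :=
    eventually_mem_nhdsWithin.mono fun δ hδ ↦ U_gaussianOrbit_of_mem_centerSet hz hδ t 0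
  have hlim_fixed : N.U t ((√Real.pi : ℂ) • z N.Ω) = (√Real.pi : ℂ) • z N.Ω :=
    tendsto_nhds_unique (((N.U t).continuous.tendsto _).comp hlim)
      (hlim.congr' (hfixed.mono fun _ ↦ Eq.symm))
  rw [map_smul] at hlim_fixed
  exact smul_right_injective H
    (Complex.ofReal_ne_zero.2 (Real.sqrt_ne_zero'.2 Real.pi_pos)) hlim_fixed

theorem conjJ_star_of_mem_centerSet (hz : z ∈ N.centerSet) : N.conjJ (star z) = z := by
  have hJz : N.J (z N.Ω) = star z N.Ω :=
    N.S_cond z hz.1 (fun _ ↦ z N.Ω) (differentiable_const _)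
      fun t ↦ (U_apply_Ω_of_mem_centerSet hz t).symm
  refine eq_of_apply_Ω_eq_of_mem_commutant (conjJ_mem_commutant (star_mem hz.1))
    (mem_centerSet_iff_mem_commutant.1 hz).2 ?_
  rw [conjJ_apply, N.J_Ω, ← hJz, N.J_invol]

/-! ### The twisted center -/

variable (N) in
theorem V_mul_V : N.V * N.V = 1 := ContinuousLinearMap.ext N.V_invol

theorem V_mul_mul_V_mem (hx : x ∈ N.M) : N.V * x * N.V ∈ N.M := by
  obtain ⟨y, hy, hyx⟩ := N.V_mem x hx
  convert hy
  exact ContinuousLinearMap.ext fun ξ ↦ (hyx ξ).symm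

theorem mem_twistedCenter_iff :
    x ∈ N.twistedCenter ↔ x ∈ N.M ∧ N.conjJ (star x) = x * N.V :=
  and_congr_right fun _ ↦
    (ContinuousLinearMap.ext_iff (f := N.conjJ (star x)) (g := x * N.V)).symm

theorem mul_V_mem_commutant (hx : x ∈ N.twistedCenter) : x * N.V ∈ N.M.commutant := by
  obtain ⟨hxM, hxV⟩ := mem_twistedCenter_iff.1 hx
  exact hxV ▸ conjJ_mem_commutant (star_mem hxM)

theorem mul_eq_mul_V_mul_mul_V (hx : x ∈ N.twistedCenter) (hy : y ∈ N.M) :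
    y * x = x * (N.V * y * N.V) := by
  have hcomm : y * (x * N.V) = x * N.V * y :=
    VonNeumannAlgebra.mem_commutant_iff.1 (mul_V_mem_commutant hx) y hy
  calc y * x = y * (x * N.V) * N.V := by rw [mul_assoc, mul_assoc, V_mul_V, mul_one]
    _ = x * (N.V * y * N.V) := by rw [hcomm]; simp only [mul_assoc]

theorem star_mul_eq_V_mul_mul_V_mul_star (hx : x ∈ N.twistedCenter) (hy : y ∈ N.M) :
    star x * y = N.V * y * N.V * star x := by
  simpa [mul_assoc, N.V_star] using
    congrArg star (mul_eq_mul_V_mul_mul_V hx (star_mem hy))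

theorem mul_star_mem_centerSet (hx : x ∈ N.twistedCenter) (hy : y ∈ N.twistedCenter) :
    x * star y ∈ N.centerSet := by
  refine ⟨mul_mem hx.1 (star_mem hy.1), fun m hm ↦ ?_⟩
  rw [mul_assoc, star_mul_eq_V_mul_mul_V_mul_star hy hm, ← mul_assoc, ← mul_assoc m,
    mul_eq_mul_V_mul_mul_V hx hm]

theorem star_mul_mem_centerSet (hx : x ∈ N.twistedCenter) (hy : y ∈ N.twistedCenter) :
    star x * y ∈ N.centerSet := by
  refine ⟨mul_mem (star_mem hx.1) hy.1, fun m hm ↦ ?_⟩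
  have hVmV : N.V * (N.V * m * N.V) * N.V = m := by
    simp only [mul_assoc, V_mul_V, mul_one]
    rw [← mul_assoc, V_mul_V, one_mul]
  have hm' : N.V * m * N.V ∈ N.M := V_mul_mul_V_mem hm
  calc star x * y * m = star x * (N.V * m * N.V * y) := by
        rw [mul_eq_mul_V_mul_mul_V hy hm', hVmV, mul_assoc]
    _ = m * (star x * y) := by
        rw [← mul_assoc, star_mul_eq_V_mul_mul_V_mul_star hx hm', hVmV, mul_assoc]

theorem mul_mem_twistedCenter (hz : z ∈ N.centerSet) (hx : x ∈ N.twistedCenter) :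
    z * x ∈ N.twistedCenter := by
  refine mem_twistedCenter_iff.2 ⟨mul_mem hz.1 hx.1, ?_⟩
  have hcomm : z * (x * N.V) = x * N.V * z :=
    VonNeumannAlgebra.mem_commutant_iff.1 (mul_V_mem_commutant hx) z hz.1
  rw [star_mul, conjJ_mul, (mem_twistedCenter_iff.1 hx).2, conjJ_star_of_mem_centerSet hz,
    ← hcomm, mul_assoc]

variable (N) in
/-- The twisted center `Z(M, V)` as a complex subspace of `B(H)`, to which the extreme point
argument for ternary rings applies. -/
def twistedCenterSubmodule : Submodule ℂ (H →L[ℂ] H) where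
  carrier := N.twistedCenter
  zero_mem' := mem_twistedCenter_iff.2 ⟨zero_mem N.M, by
    rw [star_zero, ← zero_smul ℂ 0, conjJ_smul]; simp⟩
  add_mem' hx hy := by
    rw [mem_twistedCenter_iff] at hx hy ⊢
    exact ⟨add_mem hx.1 hy.1, by rw [star_add, conjJ_add, hx.2, hy.2, add_mul]⟩
  smul_mem' c x hx := by
    rw [mem_twistedCenter_iff] at hx ⊢
    refine ⟨N.M.toStarSubalgebra.smul_mem hx.1 c, ?_⟩
    rw [star_smul, conjJ_smul, hx.2, starRingEnd_apply, star_star, smul_mul_assoc]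

variable (N) in
theorem isTernaryRing_twistedCenterSubmodule : IsTernaryRing N.twistedCenterSubmodule :=
  fun _ hx _ hy _ hz ↦ mul_mem_twistedCenter (mul_star_mem_centerSet hx hy) hz

theorem mem_iff_forall_inner :
    x ∈ N.M ↔ ∀ y ∈ N.M.commutant, ∀ ξ η, ⟪star y η, x ξ⟫_ℂ = ⟪η, x (y ξ)⟫_ℂ := by
  rw [← N.M.commutant_commutant, VonNeumannAlgebra.mem_commutant_iff, N.M.commutant_commutant]
  refine forall₂_congr fun y _ ↦ ContinuousLinearMap.ext_iff.trans <| forall_congr' fun ξ ↦ ?_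
  rw [ext_iff_inner_left ℂ]
  exact forall_congr' fun η ↦ by
    rw [ContinuousLinearMap.star_eq_adjoint, ContinuousLinearMap.adjoint_inner_left]; rfl

theorem conjJ_star_eq_mul_V_iff_forall_inner :
    N.conjJ (star x) = x * N.V ↔ ∀ ξ η, ⟪N.J ξ, x (N.J η)⟫_ℂ = ⟪η, x (N.V ξ)⟫_ℂ := by
  rw [ContinuousLinearMap.ext_iff]
  refine forall_congr' fun ξ ↦ (ext_iff_inner_left ℂ).trans <| forall_congr' fun η ↦ ?_
  rw [conjJ_apply, inner_J_comm, ContinuousLinearMap.star_eq_adjoint,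
    ContinuousLinearMap.adjoint_inner_left]
  rfl

variable (N) in
theorem isClosed_twistedCenterSubmodule :
    IsClosed {T : H →WOT[ℂ] H | T.toCLM ∈ N.twistedCenterSubmodule} := by
  have hclosed (ξ η ξ' η' : H) : IsClosed {T : H →WOT[ℂ] H | ⟪η, T ξ⟫_ℂ = ⟪η', T ξ'⟫_ℂ} := by
    refine isClosed_eq ?_ ?_ <;> fun_prop
  have hset : {T : H →WOT[ℂ] H | T.toCLM ∈ N.twistedCenterSubmodule} =
      {T | (∀ y ∈ N.M.commutant, ∀ ξ η, ⟪star y η, T ξ⟫_ℂ = ⟪η, T (y ξ)⟫_ℂ) ∧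
        ∀ ξ η, ⟪N.J ξ, T (N.J η)⟫_ℂ = ⟪η, T (N.V ξ)⟫_ℂ} :=
    Set.ext fun T ↦ mem_twistedCenter_iff.trans <|
      and_congr mem_iff_forall_inner conjJ_star_eq_mul_V_iff_forall_inner
  rw [hset]
  simp only [Set.ofPred_and, Set.ofPred_forall]
  exact (isClosed_biInter fun _ _ ↦ isClosed_iInter fun _ ↦ isClosed_iInter fun _ ↦
    hclosed _ _ _ _).inter (isClosed_iInter fun _ ↦ isClosed_iInter fun _ ↦ hclosed _ _ _ _)

theorem self_mul_star_eq_star_mul_self (hu : u ∈ N.twistedCenter) (hpi : u * star u * u = u) :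
    u * star u = star u * u := by
  calc u * star u = u * (star u * u) * star u := by rw [← mul_assoc, hpi]
    _ = star u * u * (u * star u) := by
        rw [← (star_mul_mem_centerSet hu hu).2 u hu.1, mul_assoc]
    _ = star u * (u * star u * u) := by
        rw [mul_assoc, (mul_star_mem_centerSet hu hu).2 u hu.1]
    _ = star u * u := by rw [hpi]

theorem isCentralInvProj_star_mul_self (hu : u ∈ N.twistedCenter) (hpi : u * star u * u = u) :
    N.IsCentralInvProj (star u * u) := by
  set p := star u * u with hp
  have hcentral : p ∈ N.centerSet := star_mul_mem_centerSet hu hu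
  have hup : u * p = u := by rw [hp, ← mul_assoc, hpi]
  have hidem : p * p = p := by rw [hp, mul_assoc, ← mul_assoc u, hpi]
  have hle : p * (N.V * p * N.V) = p := by
    rw [hp, mul_assoc, ← mul_eq_mul_V_mul_mul_V hu hcentral.1, hcentral.2 u hu.1, hup]
  have hge : p * (N.V * p * N.V) = N.V * p * N.V := by
    calc p * (N.V * p * N.V) = N.V * p * N.V * p := hcentral.2 _ (V_mul_mul_V_mem hcentral.1)
      _ = N.V * (p * (N.V * p * N.V)) * N.V := by simp [mul_assoc, V_mul_V]
      _ = N.V * p * N.V := by rw [hle]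
  exact ⟨hcentral, by simp [hp], hidem, fun ξ ↦ congr($(hge.symm.trans hle) ξ)⟩

/-! ### Partial isometries of full support -/

variable (N) in
/-- `u` is a partial isometry in the twisted center whose support `p = u⋆u` is the unit of the
whole twisted center, i.e. `u` is the element `u_p` of maximal support. -/
structure IsFullPartialIsometry (u : H →L[ℂ] H) : Prop where
  mem : u ∈ N.twistedCenter
  mul_support : ∀ x ∈ N.twistedCenter, x * (star u * u) = x

variable (N) in
theorem exists_isFullPartialIsometry : ∃ u, N.IsFullPartialIsometry u := by
  obtain ⟨u, hu⟩ := extremePoints_inter_closedBall_nonempty N.isClosed_twistedCenterSubmodule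
  have huN : u ∈ N.twistedCenter := hu.1.1
  have hternary := N.isTernaryRing_twistedCenterSubmodule
  have hpi : u * star u * u = u := hternary.mul_star_mul_self_of_mem_extremePoints hu
  refine ⟨u, huN, fun x hx ↦ ?_⟩
  obtain ⟨hcentral, -, hidem, -⟩ := isCentralInvProj_star_mul_self huN hpi
  calc x * (star u * u) = x - x * (1 - star u * u) := by rw [mul_one_sub, sub_sub_cancel]
    _ = x - (1 - u * star u) * x * (1 - star u * u) := by
        have hcomm : (1 - star u * u) * x = x * (1 - star u * u) := by
          rw [one_sub_mul, hcentral.2 x hx.1, mul_one_sub]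
        have hidem' : (1 - star u * u) * (1 - star u * u) = 1 - star u * u :=
          IsIdempotentElem.one_sub hidem
        rw [self_mul_star_eq_star_mul_self huN hpi, hcomm, mul_assoc, hidem']
    _ = x := by
        rw [hternary.one_sub_mul_mul_one_sub_eq_zero_of_mem_extremePoints hu hx, sub_zero]

theorem mem_tcRel_iff : x ∈ N.tcRel p ↔ x ∈ N.twistedCenter ∧ x * p = x ∧ p * x = x := by
  simp only [tcRel, twistedCenter, Set.mem_ofPred_eq]
  tauto

namespace IsFullPartialIsometry

theorem mul_star_mul_self (hu : N.IsFullPartialIsometry u) : u * star u * u = u := by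
  rw [mul_assoc, hu.mul_support u hu.mem]

theorem isCentralInvProj (hu : N.IsFullPartialIsometry u) : N.IsCentralInvProj (star u * u) :=
  isCentralInvProj_star_mul_self hu.mem hu.mul_star_mul_self

theorem self_mul_star (hu : N.IsFullPartialIsometry u) : u * star u = star u * u :=
  self_mul_star_eq_star_mul_self hu.mem hu.mul_star_mul_self

theorem support_mul (hu : N.IsFullPartialIsometry u) (hx : x ∈ N.twistedCenter) :
    star u * u * x = x := by
  rw [hu.isCentralInvProj.1.2 x hx.1, hu.mul_support x hx]

theorem tcRel_support (hu : N.IsFullPartialIsometry u) :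
    N.tcRel (star u * u) = N.twistedCenter :=
  Set.ext fun x ↦ mem_tcRel_iff.trans
    ⟨And.left, fun hx ↦ ⟨hx, hu.mul_support x hx, hu.support_mul hx⟩⟩

theorem tcRel_one_sub_support (hu : N.IsFullPartialIsometry u) :
    N.tcRel (1 - star u * u) = {0} := by
  ext x
  rw [mem_tcRel_iff, Set.mem_singleton_iff]
  refine ⟨fun ⟨hx, hx_compl, _⟩ ↦ ?_, ?_⟩
  · rw [← hx_compl, mul_one_sub, hu.mul_support x hx, sub_self]
  · rintro rfl
    exact ⟨N.twistedCenterSubmodule.zero_mem, zero_mul _, mul_zero _⟩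

theorem hasPI (hu : N.IsFullPartialIsometry u) : N.HasPI (star u * u) :=
  ⟨hu.isCentralInvProj, u, hu.tcRel_support ▸ hu.mem, rfl, hu.self_mul_star⟩

theorem mul_support_of_hasPI (hu : N.IsFullPartialIsometry u) (hp : N.HasPI p) :
    p * (star u * u) = p := by
  obtain ⟨-, v, hv, rfl, -⟩ := hp
  rw [mul_assoc, hu.mul_support v (mem_tcRel_iff.1 hv).1]

theorem eq_support_of_forall_hasPI (hu : N.IsFullPartialIsometry u) (hp : N.HasPI p)
    (hmax : ∀ q, N.HasPI q → q * p = q) : p = star u * u := by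
  rw [← hmax _ hu.hasPI, hu.isCentralInvProj.1.2 p hp.1.1.1, hu.mul_support_of_hasPI hp]

theorem V_commute_support (hu : N.IsFullPartialIsometry u) : Commute N.V (star u * u) := by
  have hVpV : N.V * (star u * u) * N.V = star u * u :=
    ContinuousLinearMap.ext hu.isCentralInvProj.2.2.2
  calc N.V * (star u * u) = N.V * (star u * u) * N.V * N.V := by
        rw [mul_assoc _ N.V N.V, V_mul_V, mul_one]
    _ = star u * u * N.V := by rw [hVpV]

theorem V_commute (hu : N.IsFullPartialIsometry u) : Commute N.V u := by
  have hcomm : u * (u * N.V) = u * N.V * u :=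
    VonNeumannAlgebra.mem_commutant_iff.1 (mul_V_mem_commutant hu.mem) u hu.mem.1
  calc N.V * u = N.V * (star u * u) * u := by rw [mul_assoc, hu.support_mul hu.mem]
    _ = star u * (u * N.V * u) := by rw [hu.V_commute_support.eq]; simp only [mul_assoc]
    _ = star u * u * u * N.V := by rw [← hcomm]; simp only [mul_assoc]
    _ = u * N.V := by rw [hu.support_mul hu.mem]

theorem support_mul_V_mul_support (hu : N.IsFullPartialIsometry u) :
    star u * u * N.V * (star u * u) = u * N.conjJ u := by
  have hconjJ : N.conjJ u = N.V * star u := by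
    rw [← star_star u, ← star_conjJ, (mem_twistedCenter_iff.1 hu.mem).2, star_mul, N.V_star,
      star_star]
  calc star u * u * N.V * (star u * u) = N.V * (star u * u * (star u * u)) := by
        rw [← hu.V_commute_support.eq, mul_assoc]
    _ = N.V * (u * star u) := by rw [hu.isCentralInvProj.2.2.1, hu.self_mul_star]
    _ = u * N.conjJ u := by rw [hconjJ, ← mul_assoc, hu.V_commute.eq, mul_assoc]

theorem twistedCenter_eq_image (hu : N.IsFullPartialIsometry u) :
    N.twistedCenter = (fun z ↦ u * z) ''
      {z | z ∈ N.centerSet ∧ z * (star u * u) = z ∧ star u * u * z = z} := by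
  refine Set.Subset.antisymm (fun x hx ↦ ?_) ?_
  · refine ⟨star u * x, ⟨star_mul_mem_centerSet hu.mem hx, ?_, ?_⟩, ?_⟩
    · rw [mul_assoc, hu.mul_support x hx]
    · rw [hu.isCentralInvProj.1.2 _ (mul_mem (star_mem hu.mem.1) hx.1), mul_assoc,
        hu.mul_support x hx]
    · change u * (star u * x) = x
      rw [← mul_assoc, hu.self_mul_star, hu.support_mul hx]
  · rintro _ ⟨z, ⟨hz, -⟩, rfl⟩
    simpa only [hz.2 u hu.mem.1] using mul_mem_twistedCenter hz hu.mem

end IsFullPartialIsometry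

end GradedVN

/-- There is a unique maximal `Ad_V`-invariant central projection `p`
carrying a partial isometry `u = u_p` in the relative twisted center `Z(M_p, V_p)` with
`u* u = u u* = p`. Moreover `V_p = u J u J`, the twisted center splits as
`Z(M, V) = Z(M_p, V_p) ⊕ Z(M_{p⊥}, V_{p⊥})` with `Z(M_{p⊥}, V_{p⊥}) = {0}`, and
`Z(M, V) = u_p · Z(M_p)`. -/
theorem twisted_center_decomposition {H : Type*} [NormedAddCommGroup H]
    [InnerProductSpace ℂ H] [CompleteSpace H] (N : GradedVN H) :
    ∃ p u : H →L[ℂ] H,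
      N.IsCentralInvProj p ∧
      u ∈ N.tcRel p ∧ star u * u = p ∧ u * star u = p ∧
      (∀ q : H →L[ℂ] H, N.HasPI q → q * p = q) ∧
      (∀ p' : H →L[ℂ] H, (N.HasPI p' ∧ ∀ q : H →L[ℂ] H, N.HasPI q → q * p' = q) →
        p' = p) ∧
      (∀ ξ, p (N.V (p ξ)) = u (N.J (u (N.J ξ)))) ∧
      N.tcRel (1 - p) = {0} ∧
      (∀ x : H →L[ℂ] H, x ∈ N.twistedCenter ↔
        ∃ y ∈ N.tcRel p, ∃ w ∈ N.tcRel (1 - p), x = y + w) ∧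
      N.twistedCenter =
        (fun z => u * z) '' {z | z ∈ N.centerSet ∧ z * p = z ∧ p * z = z} := by
  obtain ⟨u, hu⟩ := N.exists_isFullPartialIsometry
  refine ⟨star u * u, u, hu.isCentralInvProj, hu.tcRel_support ▸ hu.mem, rfl, hu.self_mul_star,
    fun q ↦ hu.mul_support_of_hasPI, fun p' hp' ↦ hu.eq_support_of_forall_hasPI hp'.1 hp'.2,
    fun ξ ↦ congr($hu.support_mul_V_mul_support ξ), hu.tcRel_one_sub_support, fun x ↦ ?_,
    hu.twistedCenter_eq_image⟩
  simp [hu.tcRel_support, hu.tcRel_one_sub_support]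

end
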